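/- arXiv:2205.10552 — 5 statements merged into one kernel-verified Lean document; each statement's English description precedes it below -/
import Mathlib

section
/- Let 𝒞 ⊆ 𝔽₂ⁿ be a k-dimensional linear code and f a probability distribution on 𝔽₂ⁿ. Let u_full be the uniform distribution on 𝔽₂ⁿ, u_𝒞 the uniform distribution on 𝒞, and (u_𝒞 ⋆ f)(x) = Σ_{y∈𝔽₂ⁿ} u_𝒞(x−y)·f(y) their convolution. Then Δ(u_full, u_𝒞 ⋆ f) = Δ(u, f^𝒞). -/
open scoped BigOperators
open scoped Classical

attribute [local instance] Fintype.ofFinite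

/-- Statistical distance between two functions on a finite set. -/
noncomputable def statDist {S : Type*} [Fintype S] (f g : S → ℝ) : ℝ :=
  (1 / 2) * ∑ x : S, |f x - g x|

/-- `f^𝒞`, the periodization of `f` over the code `𝒞`: on a coset `x̄` it is
`Σ_{c ∈ 𝒞} f(x + c)`, i.e. the sum of `f` over the coset. -/
noncomputable def periodize {n : ℕ} (C : Submodule (ZMod 2) (Fin n → ZMod 2))
    (f : (Fin n → ZMod 2) → ℝ) : ((Fin n → ZMod 2) ⧸ C) → ℝ :=
  fun xbar => ∑ y : Fin n → ZMod 2,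
    if (Submodule.Quotient.mk y : (Fin n → ZMod 2) ⧸ C) = xbar then f y else 0

/-- The uniform distribution on the quotient `𝔽₂ⁿ/𝒞`. -/
noncomputable def unifQuot {n : ℕ} (C : Submodule (ZMod 2) (Fin n → ZMod 2)) :
    ((Fin n → ZMod 2) ⧸ C) → ℝ :=
  fun _ => (Nat.card ((Fin n → ZMod 2) ⧸ C) : ℝ)⁻¹

/-- Convolution of two functions on `𝔽₂ⁿ`. -/
noncomputable def convF2 {n : ℕ} (f g : (Fin n → ZMod 2) → ℝ) : (Fin n → ZMod 2) → ℝ :=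
  fun x => ∑ y : Fin n → ZMod 2, f (x - y) * g y

/-- Summing over a finite module a function that factors through the quotient by `C` counts each
coset `|C|` times. -/
theorem sum_comp_quotient_mk {R M : Type*} [Ring R] [AddCommGroup M] [Module R M] [Fintype M]
    (C : Submodule R M) [Fintype (M ⧸ C)] (g : M ⧸ C → ℝ) :
    ∑ x : M, g (Submodule.Quotient.mk x) = Nat.card C * ∑ q, g q := by
  let e : M ≃ (M ⧸ C) × C := AddSubgroup.addGroupEquivQuotientProdAddSubgroup (s := C.toAddSubgroup)
  have he : ∀ x, (e x).1 = Submodule.Quotient.mk x := fun x => rfl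
  simp_rw [← he]
  rw [Equiv.sum_comp e (fun p => g p.1), Fintype.sum_prod_type, Finset.mul_sum]
  simp [Nat.card_eq_fintype_card]

/-- Convolving with the uniform distribution on `C` is, up to normalization, periodizing. -/
theorem convF2_unif_eq_periodize {n : ℕ} (C : Submodule (ZMod 2) (Fin n → ZMod 2))
    (f : (Fin n → ZMod 2) → ℝ) (x : Fin n → ZMod 2) :
    convF2 (fun x => if x ∈ C then (Nat.card C : ℝ)⁻¹ else 0) f x =
      (Nat.card C : ℝ)⁻¹ * periodize C f (Submodule.Quotient.mk x) := by
  unfold convF2 periodize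
  rw [Finset.mul_sum]
  refine Finset.sum_congr rfl fun y _ => ?_
  simp only [eq_comm (a := (Submodule.Quotient.mk y : (Fin n → ZMod 2) ⧸ C)),
    Submodule.Quotient.eq, ite_mul, mul_ite, zero_mul, mul_zero]

/-- For a `k`-dimensional linear code `𝒞 ⊆ 𝔽₂ⁿ` and a probability distribution `f`,
`Δ(u_full, u_𝒞 ⋆ f) = Δ(u, f^𝒞)`. -/
theorem statDist_conv_eq_statDist_quot {n k : ℕ} (C : Submodule (ZMod 2) (Fin n → ZMod 2))
    (hk : Module.finrank (ZMod 2) C = k)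
    (f : (Fin n → ZMod 2) → ℝ) (hf0 : ∀ x, 0 ≤ f x)
    (hf1 : ∑ x : Fin n → ZMod 2, f x = 1) :
    statDist (fun _ : Fin n → ZMod 2 => ((2 : ℝ) ^ n)⁻¹)
        (convF2 (fun x => if x ∈ C then (Nat.card C : ℝ)⁻¹ else 0) f) =
      statDist (unifQuot C) (periodize C f) := by
  have hcard : (2 : ℝ) ^ n = Nat.card C * Nat.card ((Fin n → ZMod 2) ⧸ C) := by
    have h := C.card_eq_card_quotient_mul_card
    rw [Nat.card_eq_fintype_card (α := Fin n → ZMod 2), Fintype.card_fun, ZMod.card,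
      Fintype.card_fin] at h
    exact_mod_cast h
  have hC : (0 : ℝ) < Nat.card C := by exact_mod_cast Nat.card_pos
  unfold statDist
  congr 1
  have hpt : ∀ x : Fin n → ZMod 2,
      |((2 : ℝ) ^ n)⁻¹ - convF2 (fun x => if x ∈ C then (Nat.card C : ℝ)⁻¹ else 0) f x| =
        (Nat.card C : ℝ)⁻¹ * |unifQuot C (Submodule.Quotient.mk x) -
          periodize C f (Submodule.Quotient.mk x)| := fun x => by
    rw [convF2_unif_eq_periodize, hcard, mul_inv, ← mul_sub, abs_mul, abs_of_pos (inv_pos.2 hC),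
      unifQuot]
  simp_rw [hpt]
  rw [← Finset.mul_sum, sum_comp_quotient_mk C fun q => |unifQuot C q - periodize C f q|,
    inv_mul_cancel_left₀ hC.ne']
end

section
/- Fix integers 1 ≤ k ≤ n and 0 ≤ w ≤ n. Sample a uniformly random matrix G ∈ 𝔽₂^{k×n} and let 𝒞 = {mG : m ∈ 𝔽₂^k}. Let f_unif,w be the uniform distribution on the Hamming sphere 𝒮_w = {x ∈ 𝔽₂ⁿ : |x| = w}. Then E_G[Δ(u, f_unif,w^𝒞)] ≤ √( 2^{n−k} / C(n,w) ). -/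
open scoped BigOperators
open scoped Classical

attribute [local instance] Fintype.ofFinite

/-- The uniform distribution on the Hamming sphere of radius `w` in `𝔽₂ⁿ`. -/
noncomputable def funif (n w : ℕ) : (Fin n → ZMod 2) → ℝ :=
  fun x => if hammingNorm x = w then ((n.choose w : ℝ))⁻¹ else 0

/-- The code generated by the matrix `G`, i.e. `{mG : m ∈ 𝔽₂ᵏ}`. -/
def codeOf {n k : ℕ} (G : Matrix (Fin k) (Fin n) (ZMod 2)) :
    Submodule (ZMod 2) (Fin n → ZMod 2) :=
  LinearMap.range (Matrix.vecMulLinear G)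

/-- The number of binary `k × n` matrices. -/
theorem card_matrix_zmod_two (k n : ℕ) :
    (Fintype.card (Matrix (Fin k) (Fin n) (ZMod 2)) : ℝ) = 2 ^ (k * n) := by
  rw [← Nat.card_eq_fintype_card]
  simp [Matrix, ZMod.card, ← pow_mul, mul_comm]

theorem card_vector_zmod_two (n : ℕ) : (Fintype.card (Fin n → ZMod 2) : ℝ) = 2 ^ n := by
  simp [ZMod.card]

/-- Averages are preserved by pulling back along a surjective homomorphism of finite groups. -/
theorem card_mul_sum_comp_of_surjective {A B : Type*} [AddCommGroup A] [AddCommGroup B]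
    [Fintype A] [Fintype B] (φ : A →+ B) (hφ : Function.Surjective φ) (F : B → ℝ) :
    (Fintype.card B : ℝ) * ∑ a, F (φ a) = (Fintype.card A : ℝ) * ∑ b, F b := by
  have hA : ∑ a : A, ∑ b : B, F (b + φ a) = (Fintype.card A : ℝ) * ∑ b, F b := by
    have h (a : A) : ∑ b : B, F (b + φ a) = ∑ b, F b := Equiv.sum_comp (Equiv.addRight (φ a)) F
    simp [h]
  have hB : ∑ b : B, ∑ a : A, F (b + φ a) = (Fintype.card B : ℝ) * ∑ a, F (φ a) := by
    have h (b : B) : ∑ a : A, F (b + φ a) = ∑ a, F (φ a) := by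
      obtain ⟨a', rfl⟩ := hφ b
      simp only [← map_add]
      exact Equiv.sum_comp (Equiv.addLeft a') fun a => F (φ a)
    simp [h]
  rw [← hA, ← hB, Finset.sum_comm]

theorem periodize_mk {n : ℕ} (C : Submodule (ZMod 2) (Fin n → ZMod 2))
    (f : (Fin n → ZMod 2) → ℝ) (x : Fin n → ZMod 2) :
    periodize C f (Submodule.Quotient.mk x) = ∑ c : C, f (x + c) := by
  unfold periodize
  rw [← Equiv.sum_comp (Equiv.addLeft x)]
  simp only [Equiv.coe_addLeft, Submodule.Quotient.eq, add_sub_cancel_left]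
  rw [← Finset.sum_filter]
  exact (Finset.sum_subtype _ (by simp) fun c => f (x + c))

theorem two_pow_mul_periodize_codeOf {n k : ℕ} (G : Matrix (Fin k) (Fin n) (ZMod 2))
    (f : (Fin n → ZMod 2) → ℝ) (x : Fin n → ZMod 2) :
    (2 : ℝ) ^ k * periodize (codeOf G) f (Submodule.Quotient.mk x) =
      Fintype.card (codeOf G) * ∑ m : Fin k → ZMod 2, f (x + Matrix.vecMul m G) := by
  have h := card_mul_sum_comp_of_surjective (B := codeOf G)
    (Matrix.vecMulLinear G).rangeRestrict.toAddMonoidHom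
    (Matrix.vecMulLinear G).surjective_rangeRestrict fun c => f (x + c)
  rw [periodize_mk]
  rw [card_vector_zmod_two] at h
  exact h.symm

/-- The distance to uniform on the quotient, as a distance to uniform on `𝔽₂ⁿ` of the
average of the translates of `f` by the codewords `mG`. -/
theorem statDist_unifQuot_periodize_codeOf {n k : ℕ} (G : Matrix (Fin k) (Fin n) (ZMod 2))
    (f : (Fin n → ZMod 2) → ℝ) :
    statDist (unifQuot (codeOf G)) (periodize (codeOf G) f) =
      (1 / 2) * ∑ x : Fin n → ZMod 2,
        |((2 : ℝ) ^ n)⁻¹ - ((2 : ℝ) ^ k)⁻¹ *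
          ∑ m : Fin k → ZMod 2, f (x + Matrix.vecMul m G)| := by
  unfold statDist
  congr 1
  have h := card_mul_sum_comp_of_surjective (codeOf G).mkQ.toAddMonoidHom
    (codeOf G).mkQ_surjective
    fun q => |unifQuot (codeOf G) q - periodize (codeOf G) f q|
  have hcard : (2 : ℝ) ^ n =
      Fintype.card (codeOf G) * Fintype.card ((Fin n → ZMod 2) ⧸ codeOf G) := by
    rw [← card_vector_zmod_two, ← Nat.card_eq_fintype_card, ← Nat.card_eq_fintype_card,
      ← Nat.card_eq_fintype_card]
    exact_mod_cast Submodule.card_eq_card_quotient_mul_card (codeOf G)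
  have hC : (0 : ℝ) < Fintype.card (codeOf G) := by exact_mod_cast Fintype.card_pos
  have hQ : (0 : ℝ) < Fintype.card ((Fin n → ZMod 2) ⧸ codeOf G) := by
    exact_mod_cast Fintype.card_pos
  rw [card_vector_zmod_two] at h
  refine mul_left_cancel₀ (pow_ne_zero n (two_ne_zero (α := ℝ))) (h.symm.trans ?_)
  rw [hcard, mul_comm (Fintype.card (codeOf G) : ℝ), mul_assoc, Finset.mul_sum _ _
    (Fintype.card (codeOf G) : ℝ)]
  congr 1
  refine Finset.sum_congr rfl fun x _ => ?_
  have hp := two_pow_mul_periodize_codeOf G f x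
  have hk : (2 : ℝ) ^ k ≠ 0 := by positivity
  rw [← abs_of_pos hC, ← abs_mul, abs_of_pos hC]
  congr 1
  change (Nat.card ((Fin n → ZMod 2) ⧸ codeOf G) : ℝ)⁻¹ -
    periodize (codeOf G) f (Submodule.Quotient.mk x) = _
  rw [Nat.card_eq_fintype_card, eq_div_of_mul_eq hk ((mul_comm _ _).trans hp)]
  field_simp

/-- For `d ≠ 0` and `G` uniform, `dG` is uniform. -/
theorem two_pow_mul_sum_vecMul {n k : ℕ} {d : Fin k → ZMod 2} (hd : d ≠ 0)
    (F : (Fin n → ZMod 2) → ℝ) :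
    (2 : ℝ) ^ n * ∑ G : Matrix (Fin k) (Fin n) (ZMod 2), F (Matrix.vecMul d G) =
      2 ^ (k * n) * ∑ x, F x := by
  have hsurj : Function.Surjective fun G : Matrix (Fin k) (Fin n) (ZMod 2) =>
      Matrix.vecMul d G := by
    intro y
    obtain ⟨i, hi⟩ := Function.ne_iff.mp hd
    refine ⟨Matrix.of fun j l => if j = i then (d i)⁻¹ * y l else 0, ?_⟩
    ext l
    have hi' : d i ≠ 0 := hi
    simp [Matrix.vecMul, dotProduct, hi']
  have h := card_mul_sum_comp_of_surjective
    (AddMonoidHom.mk' (fun G : Matrix (Fin k) (Fin n) (ZMod 2) => Matrix.vecMul d G)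
      fun A B => Matrix.vecMul_add A B d) hsurj F
  rw [card_vector_zmod_two, card_matrix_zmod_two] at h
  exact h

theorem sum_translate_mul_translate_le {n k : ℕ} (f : (Fin n → ZMod 2) → ℝ)
    (hf : ∑ x, f x = 1) (m m' : Fin k → ZMod 2) :
    ∑ G : Matrix (Fin k) (Fin n) (ZMod 2), ∑ x,
        f (x + Matrix.vecMul m G) * f (x + Matrix.vecMul m' G) ≤
      2 ^ (k * n) * ((if m = m' then ∑ x, f x ^ 2 else 0) + ((2 : ℝ) ^ n)⁻¹) := by
  have hshift (G : Matrix (Fin k) (Fin n) (ZMod 2)) :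
      ∑ x, f (x + Matrix.vecMul m G) * f (x + Matrix.vecMul m' G) =
        ∑ x, f x * f (x + Matrix.vecMul (m' - m) G) := by
    rw [← Equiv.sum_comp (Equiv.addRight (Matrix.vecMul m G))
      fun x => f x * f (x + Matrix.vecMul (m' - m) G)]
    refine Finset.sum_congr rfl fun x _ => ?_
    simp only [Equiv.coe_addRight, Matrix.sub_vecMul]
    congr 2
    abel
  simp only [hshift]
  by_cases h : m = m'
  · subst h
    simp only [sub_self, Matrix.zero_vecMul, add_zero, Finset.sum_const, Finset.card_univ,
      nsmul_eq_mul, card_matrix_zmod_two, if_true, ← sq]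
    gcongr
    simp
  · rw [if_neg h, zero_add, Finset.sum_comm]
    have hx (x : Fin n → ZMod 2) :
        ∑ G : Matrix (Fin k) (Fin n) (ZMod 2), f (x + Matrix.vecMul (m' - m) G) =
          2 ^ (k * n) * ((2 : ℝ) ^ n)⁻¹ := by
      have h1 := two_pow_mul_sum_vecMul (sub_ne_zero.mpr (Ne.symm h)) fun y => f (x + y)
      have h2 : ∑ y, f (x + y) = 1 := (Equiv.sum_comp (Equiv.addLeft x) f).trans hf
      rw [h2, mul_one] at h1
      rw [← h1]
      field_simp
    simp only [← Finset.mul_sum, hx, ← Finset.sum_mul, hf, one_mul, le_refl]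

/-- Second moment of the deviation of the averaged translates from uniform. -/
theorem sum_sq_deviation_le {n k : ℕ} (f : (Fin n → ZMod 2) → ℝ) (hf : ∑ x, f x = 1) :
    ∑ G : Matrix (Fin k) (Fin n) (ZMod 2), ∑ x : Fin n → ZMod 2,
        (((2 : ℝ) ^ n)⁻¹ - ((2 : ℝ) ^ k)⁻¹ *
          ∑ m : Fin k → ZMod 2, f (x + Matrix.vecMul m G)) ^ 2 ≤
      2 ^ (k * n) * (((2 : ℝ) ^ k)⁻¹ * ∑ x, f x ^ 2) := by
  have hfirst (G : Matrix (Fin k) (Fin n) (ZMod 2)) :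
      ∑ x, ∑ m : Fin k → ZMod 2, f (x + Matrix.vecMul m G) = 2 ^ k := by
    rw [Finset.sum_comm]
    have h (m : Fin k → ZMod 2) : ∑ x, f (x + Matrix.vecMul m G) = 1 :=
      (Equiv.sum_comp (Equiv.addRight (Matrix.vecMul m G)) f).trans hf
    simp only [h, Finset.sum_const, Finset.card_univ, nsmul_eq_mul, card_vector_zmod_two, mul_one]
  have hsecond : ∑ G : Matrix (Fin k) (Fin n) (ZMod 2), ∑ x,
      (∑ m : Fin k → ZMod 2, f (x + Matrix.vecMul m G)) ^ 2 ≤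
        2 ^ (k * n) * (2 ^ k * (∑ x, f x ^ 2 + 2 ^ k * ((2 : ℝ) ^ n)⁻¹)) := by
    calc
      _ = ∑ m : Fin k → ZMod 2, ∑ m' : Fin k → ZMod 2,
          ∑ G : Matrix (Fin k) (Fin n) (ZMod 2), ∑ x,
            f (x + Matrix.vecMul m G) * f (x + Matrix.vecMul m' G) := by
        simp only [sq, Finset.sum_mul_sum]
        rw [← Fintype.sum_prod_type', Finset.sum_comm]
        refine Finset.sum_congr rfl fun m _ => ?_
        rw [Finset.sum_comm]
        exact Finset.sum_congr rfl fun m' _ => Fintype.sum_prod_type _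
      _ ≤ ∑ m : Fin k → ZMod 2, ∑ m' : Fin k → ZMod 2,
          2 ^ (k * n) * ((if m = m' then ∑ x, f x ^ 2 else 0) + ((2 : ℝ) ^ n)⁻¹) :=
        Finset.sum_le_sum fun m _ => Finset.sum_le_sum fun m' _ =>
          sum_translate_mul_translate_le f hf m m'
      _ = _ := by
        simp only [← Finset.mul_sum, Finset.sum_add_distrib, Finset.sum_ite_eq,
          Finset.mem_univ, if_true, Finset.sum_const, Finset.card_univ, nsmul_eq_mul, card_vector_zmod_two]
        ring
  have hexpand : ∑ G : Matrix (Fin k) (Fin n) (ZMod 2), ∑ x : Fin n → ZMod 2,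
        (((2 : ℝ) ^ n)⁻¹ - ((2 : ℝ) ^ k)⁻¹ *
          ∑ m : Fin k → ZMod 2, f (x + Matrix.vecMul m G)) ^ 2 =
      ((2 : ℝ) ^ k)⁻¹ ^ 2 * (∑ G : Matrix (Fin k) (Fin n) (ZMod 2), ∑ x,
        (∑ m : Fin k → ZMod 2, f (x + Matrix.vecMul m G)) ^ 2) -
        2 ^ (k * n) * ((2 : ℝ) ^ n)⁻¹ := by
    simp only [sub_sq, mul_pow, Finset.sum_add_distrib, Finset.sum_sub_distrib,
      ← Finset.mul_sum, hfirst, Finset.sum_const, Finset.card_univ, nsmul_eq_mul, card_matrix_zmod_two, card_vector_zmod_two]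
    field_simp
    ring
  rw [hexpand, sub_le_iff_le_add]
  refine (mul_le_mul_of_nonneg_left hsecond (by positivity)).trans (le_of_eq ?_)
  field_simp

theorem card_hammingNorm_eq (n w : ℕ) :
    (Finset.univ.filter fun x : Fin n → ZMod 2 => hammingNorm x = w).card = n.choose w := by
  have h : n.choose w = (Finset.powersetCard w (Finset.univ : Finset (Fin n))).card := by simp
  rw [h]
  refine Finset.card_bij' (fun x _ => Finset.univ.filter fun i => x i ≠ 0)
    (fun s _ i => if i ∈ s then 1 else 0) ?_ ?_ ?_ ?_
  · intro x hx
    simpa [hammingNorm, Finset.mem_powersetCard] using hx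
  · intro s hs
    simpa [hammingNorm, Finset.mem_powersetCard] using hs
  · intro x _
    funext i
    have key : ∀ a : ZMod 2, (if a ≠ 0 then (1 : ZMod 2) else 0) = a := by decide
    simpa using key (x i)
  · intro s _
    ext i
    simp

theorem sum_funif {n w : ℕ} (hw : w ≤ n) : ∑ x, funif n w x = 1 := by
  have h : (n.choose w : ℝ) ≠ 0 := by exact_mod_cast (Nat.choose_pos hw).ne'
  simp only [funif]
  rw [← Finset.sum_filter, Finset.sum_const, card_hammingNorm_eq, nsmul_eq_mul,
    mul_inv_cancel₀ h]

theorem sum_funif_sq {n w : ℕ} (hw : w ≤ n) :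
    ∑ x, funif n w x ^ 2 = (n.choose w : ℝ)⁻¹ := by
  have h (x : Fin n → ZMod 2) : funif n w x ^ 2 = (n.choose w : ℝ)⁻¹ * funif n w x := by
    unfold funif
    split_ifs <;> simp [sq]
  simp only [h, ← Finset.mul_sum, sum_funif hw, mul_one]

/-- For `1 ≤ k ≤ n` and `0 ≤ w ≤ n`, the expectation over a uniform `G ∈ 𝔽₂^{k×n}` of
`Δ(u, f_unif,w^𝒞)`, where `𝒞` is the code generated by `G`, is at most
`√(2^{n−k}/C(n,w))`. -/
theorem expected_statDist_unif_sphere_random_code {n k w : ℕ} (hk1 : 1 ≤ k) (hkn : k ≤ n)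
    (hw : w ≤ n) :
    (∑ G : Matrix (Fin k) (Fin n) (ZMod 2),
        statDist (unifQuot (codeOf G)) (periodize (codeOf G) (funif n w))) /
        (2 : ℝ) ^ (k * n) ≤
      Real.sqrt ((2 : ℝ) ^ (n - k) / (n.choose w : ℝ)) := by
  have hmoment := sum_sq_deviation_le (k := k) (funif n w) (sum_funif hw)
  rw [sum_funif_sq hw] at hmoment
  simp only [statDist_unifQuot_periodize_codeOf, ← Finset.mul_sum]
  rw [← Fintype.sum_prod_type'] at hmoment ⊢
  set D : Matrix (Fin k) (Fin n) (ZMod 2) × (Fin n → ZMod 2) → ℝ := fun p =>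
    ((2 : ℝ) ^ n)⁻¹ - ((2 : ℝ) ^ k)⁻¹ *
      ∑ m : Fin k → ZMod 2, funif n w (p.2 + Matrix.vecMul m p.1)
  change ∑ p, D p ^ 2 ≤ _ at hmoment
  change (1 / 2 * ∑ p, |D p|) / _ ≤ _
  have hcs : (∑ p, |D p|) ^ 2 ≤ 2 ^ (k * n) * 2 ^ n * ∑ p, D p ^ 2 := by
    have h := sq_sum_le_card_mul_sum_sq (s := Finset.univ) (f := fun p => |D p|)
    simpa only [sq_abs, Finset.card_univ, Fintype.card_prod, Nat.cast_mul, card_vector_zmod_two, card_matrix_zmod_two] using h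
  have hpow : (2 : ℝ) ^ (n - k) = 2 ^ n * (2 ^ k)⁻¹ := pow_sub₀ _ two_ne_zero hkn
  apply Real.le_sqrt_of_sq_le
  calc
    _ = 1 / 4 * (∑ p, |D p|) ^ 2 / (2 ^ (k * n)) ^ 2 := by ring
    _ ≤ 1 * (2 ^ (k * n) * 2 ^ n * (2 ^ (k * n) * ((2 ^ k)⁻¹ * (n.choose w : ℝ)⁻¹))) /
        (2 ^ (k * n)) ^ 2 := by
      gcongr
      · norm_num
      · exact hcs.trans (by gcongr)
    _ = _ := by
      rw [hpow]
      field_simp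
end

section
/- For every p ∈ (0,1/2] and every ε > 0 there exists a constant c > 0 (depending only on p and ε) such that for every n ≥ 1 and every linear code 𝒞 ⊆ 𝔽₂ⁿ, Δ(u, f_ber,p^𝒞) ≤ Σ_r Δ(u, f_unif,r^𝒞) + 2^{−cn}, where the sum ranges over all integers r with (1−ε)np ≤ r ≤ (1+ε)np. -/
open scoped BigOperators
open scoped Classical

attribute [local instance] Fintype.ofFinite

/-- The Bernoulli distribution of parameter `p` on `𝔽₂ⁿ`. -/
noncomputable def fber (n : ℕ) (p : ℝ) : (Fin n → ZMod 2) → ℝ :=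
  fun x => p ^ (hammingNorm x) * (1 - p) ^ (n - hammingNorm x)

theorem statDist_nonneg {S : Type*} [Fintype S] (f g : S → ℝ) : 0 ≤ statDist f g := by
  unfold statDist
  positivity

theorem card_hammingNorm_eq_le (n r : ℕ) :
    (Finset.univ.filter fun x : Fin n → ZMod 2 => hammingNorm x = r).card ≤ n.choose r := by
  have hcard : (Finset.powersetCard r (Finset.univ : Finset (Fin n))).card = n.choose r := by
    simp [Finset.card_powersetCard]
  rw [← hcard]
  refine Finset.card_le_card_of_injOn (fun x => Finset.univ.filter fun i => x i ≠ 0) ?_ ?_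
  · intro x hx
    have hx' : hammingNorm x = r := by simpa using hx
    simp only [Finset.mem_coe, Finset.mem_powersetCard, Finset.subset_univ, true_and]
    rw [← hx', hammingNorm]
  · intro x _ y _ hxy
    funext i
    have hi : x i ≠ 0 ↔ y i ≠ 0 := by
      simpa using congrArg (fun s => i ∈ s) hxy
    have key : ∀ a b : ZMod 2, (a ≠ 0 ↔ b ≠ 0) → a = b := by decide
    exact key _ _ hi

theorem funif_nonneg (n r : ℕ) (x : Fin n → ZMod 2) : 0 ≤ funif n r x := by
  unfold funif
  positivity

theorem sum_funif_le_one (n r : ℕ) : ∑ x : Fin n → ZMod 2, funif n r x ≤ 1 := by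
  simp only [funif]
  rw [← Finset.sum_filter, Finset.sum_const, nsmul_eq_mul, ← div_eq_mul_inv]
  exact div_le_one_of_le₀ (by exact_mod_cast card_hammingNorm_eq_le n r) (by positivity)

/-- The probability that a binomial variable of parameters `n`, `p` equals `r`. -/
noncomputable def binomialWeight (n : ℕ) (p : ℝ) (r : ℕ) : ℝ :=
  n.choose r * (p ^ r * (1 - p) ^ (n - r))

theorem binomialWeight_nonneg {p : ℝ} (hp0 : 0 ≤ p) (hp1 : p ≤ 1) (n r : ℕ) :
    0 ≤ binomialWeight n p r := by
  have : 0 ≤ 1 - p := by linarith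
  unfold binomialWeight
  positivity

theorem sum_binomialWeight_mul_exp (n : ℕ) (p t : ℝ) :
    ∑ r ∈ Finset.range (n + 1), binomialWeight n p r * Real.exp (t * r) =
      (p * Real.exp t + (1 - p)) ^ n := by
  rw [add_pow]
  refine Finset.sum_congr rfl fun r _ => ?_
  rw [binomialWeight, mul_pow, mul_comm t, Real.exp_nat_mul]
  ring

theorem sum_binomialWeight (n : ℕ) (p : ℝ) :
    ∑ r ∈ Finset.range (n + 1), binomialWeight n p r = 1 := by
  simpa using sum_binomialWeight_mul_exp n p 0

theorem fber_eq_sum_funif (n : ℕ) (p : ℝ) (x : Fin n → ZMod 2) :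
    fber n p x = ∑ r ∈ Finset.range (n + 1), binomialWeight n p r * funif n r x := by
  have hx : hammingNorm x ≤ n := by simpa using hammingNorm_le_card_fintype (x := x)
  have hc : (n.choose (hammingNorm x) : ℝ) ≠ 0 := by
    exact_mod_cast (Nat.choose_pos hx).ne'
  simp only [funif, mul_ite, mul_zero]
  rw [Finset.sum_ite_eq, if_pos (Finset.mem_range.2 (by omega)), binomialWeight, fber]
  field_simp

theorem sum_fber_le_one {p : ℝ} (hp0 : 0 ≤ p) (hp1 : p ≤ 1) (n : ℕ) :
    ∑ x : Fin n → ZMod 2, fber n p x ≤ 1 := by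
  simp only [fber_eq_sum_funif]
  rw [Finset.sum_comm, ← sum_binomialWeight n p]
  refine Finset.sum_le_sum fun r _ => ?_
  rw [← Finset.mul_sum]
  exact mul_le_of_le_one_right (binomialWeight_nonneg hp0 hp1 n r) (sum_funif_le_one n r)

section Periodize

variable {n : ℕ} (C : Submodule (ZMod 2) (Fin n → ZMod 2))

theorem sum_periodize (f : (Fin n → ZMod 2) → ℝ) :
    ∑ x, periodize C f x = ∑ y, f y := by
  simp only [periodize]
  rw [Finset.sum_comm]
  simp

theorem periodize_nonneg {f : (Fin n → ZMod 2) → ℝ} (hf : ∀ x, 0 ≤ f x)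
    (x : (Fin n → ZMod 2) ⧸ C) : 0 ≤ periodize C f x := by
  refine Finset.sum_nonneg fun y _ => ?_
  split_ifs
  exacts [hf y, le_rfl]

theorem le_periodize_mk {f : (Fin n → ZMod 2) → ℝ} (hf : ∀ x, 0 ≤ f x)
    (y : Fin n → ZMod 2) : f y ≤ periodize C f (Submodule.Quotient.mk y) := by
  unfold periodize
  refine le_trans (by simp) (Finset.single_le_sum (f := fun z =>
    if (Submodule.Quotient.mk z : (Fin n → ZMod 2) ⧸ C) = Submodule.Quotient.mk y
      then f z else 0) (fun z _ => ?_) (Finset.mem_univ y))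
  split_ifs
  exacts [hf z, le_rfl]

theorem unifQuot_nonneg (x : (Fin n → ZMod 2) ⧸ C) : 0 ≤ unifQuot C x := by
  unfold unifQuot
  positivity

theorem unifQuot_le_one (x : (Fin n → ZMod 2) ⧸ C) : unifQuot C x ≤ 1 := by
  unfold unifQuot
  refine inv_le_one_of_one_le₀ ?_
  exact_mod_cast Nat.card_pos

theorem sum_unifQuot : ∑ x, unifQuot C x = 1 := by
  have h : (Nat.card ((Fin n → ZMod 2) ⧸ C) : ℝ) ≠ 0 := by
    exact_mod_cast Nat.card_pos.ne'
  simp only [unifQuot, Finset.sum_const, Finset.card_univ, nsmul_eq_mul]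
  rw [← Nat.card_eq_fintype_card, mul_inv_cancel₀ h]

/-- If the periodization of a subprobability `f` dominates `q • u`, with `q ≤ 1`, then
its distance to `u` is at most `1 - q`. -/
theorem statDist_unifQuot_periodize_le {f : (Fin n → ZMod 2) → ℝ} {q : ℝ}
    (hq1 : q ≤ 1) (hsum : ∑ x, f x ≤ 1)
    (hq : ∀ x, q * unifQuot C x ≤ periodize C f x) :
    statDist (unifQuot C) (periodize C f) ≤ 1 - q := by
  have h : ∑ x, |unifQuot C x - periodize C f x| ≤
      ∑ x, (unifQuot C x + periodize C f x - 2 * (q * unifQuot C x)) := by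
    refine Finset.sum_le_sum fun x _ => abs_le.2 ⟨?_, ?_⟩
    · nlinarith [unifQuot_nonneg C x]
    · linarith [hq x]
  rw [Finset.sum_sub_distrib, Finset.sum_add_distrib, ← Finset.mul_sum, ← Finset.mul_sum,
    sum_unifQuot, sum_periodize] at h
  unfold statDist
  linarith

theorem statDist_funif_le_one (r : ℕ) :
    statDist (unifQuot C) (periodize C (funif n r)) ≤ 1 := by
  simpa using statDist_unifQuot_periodize_le C zero_le_one (sum_funif_le_one n r)
    (fun x => by simpa using periodize_nonneg C (funif_nonneg n r) x)

theorem statDist_fber_le_one_sub_pow {p : ℝ} (hp0 : 0 ≤ p) (hp : p ≤ 1 / 2) :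
    statDist (unifQuot C) (periodize C (fber n p)) ≤ 1 - p ^ n := by
  have hle : ∀ x, p ^ n ≤ fber n p x := fun x => by
    have hx : hammingNorm x ≤ n := by simpa using hammingNorm_le_card_fintype (x := x)
    calc p ^ n = p ^ hammingNorm x * p ^ (n - hammingNorm x) := by
          rw [← pow_add, Nat.add_sub_cancel' hx]
      _ ≤ fber n p x := by
          unfold fber
          gcongr
          linarith
  refine statDist_unifQuot_periodize_le C (pow_le_one₀ hp0 (by linarith))
    (sum_fber_le_one hp0 (by linarith) n) fun x => ?_
  obtain ⟨y, rfl⟩ := Submodule.Quotient.mk_surjective C x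
  calc p ^ n * unifQuot C _ ≤ p ^ n :=
        mul_le_of_le_one_right (by positivity) (unifQuot_le_one C _)
    _ ≤ fber n p y := hle y
    _ ≤ _ := le_periodize_mk C (fun z => (pow_nonneg hp0 n).trans (hle z)) y

theorem periodize_fber (p : ℝ) (x : (Fin n → ZMod 2) ⧸ C) :
    periodize C (fber n p) x =
      ∑ r ∈ Finset.range (n + 1), binomialWeight n p r * periodize C (funif n r) x := by
  simp only [periodize, fber_eq_sum_funif, Finset.mul_sum]
  rw [Finset.sum_comm]
  refine Finset.sum_congr rfl fun y _ => ?_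
  split_ifs <;> simp

theorem statDist_fber_le_sum {p : ℝ} (hp0 : 0 ≤ p) (hp1 : p ≤ 1) :
    statDist (unifQuot C) (periodize C (fber n p)) ≤ ∑ r ∈ Finset.range (n + 1),
      binomialWeight n p r * statDist (unifQuot C) (periodize C (funif n r)) := by
  have h : ∑ x, |unifQuot C x - periodize C (fber n p) x| ≤
      ∑ x, ∑ r ∈ Finset.range (n + 1),
        binomialWeight n p r * |unifQuot C x - periodize C (funif n r) x| := by
    refine Finset.sum_le_sum fun x _ => ?_
    have hx : unifQuot C x - periodize C (fber n p) x = ∑ r ∈ Finset.range (n + 1),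
        binomialWeight n p r * (unifQuot C x - periodize C (funif n r) x) := by
      simp only [mul_sub]
      rw [Finset.sum_sub_distrib, ← Finset.sum_mul, sum_binomialWeight, one_mul,
        periodize_fber]
    rw [hx]
    refine (Finset.abs_sum_le_sum_abs _ _).trans (Finset.sum_le_sum fun r _ => ?_)
    rw [abs_mul, abs_of_nonneg (binomialWeight_nonneg hp0 hp1 n r)]
  rw [Finset.sum_comm] at h
  calc statDist (unifQuot C) (periodize C (fber n p))
      ≤ 1 / 2 * ∑ r ∈ Finset.range (n + 1), ∑ x,
        binomialWeight n p r * |unifQuot C x - periodize C (funif n r) x| := by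
        unfold statDist
        gcongr
    _ = _ := by
        simp only [statDist, Finset.mul_sum]
        exact Finset.sum_congr rfl fun r _ => Finset.sum_congr rfl fun x _ => by ring

end Periodize

theorem bernoulli_mgf_le {p t : ℝ} (hp0 : 0 ≤ p) (ht : |t| ≤ 1) :
    p * Real.exp t + (1 - p) ≤ Real.exp (p * t + p * t ^ 2) := by
  have h := (abs_le.1 (Real.abs_exp_sub_one_sub_id_le ht)).2
  nlinarith [Real.add_one_le_exp (p * t + p * t ^ 2)]

theorem sum_binomialWeight_mul_exp_le {p t : ℝ} (hp0 : 0 ≤ p) (hp1 : p ≤ 1) (ht : |t| ≤ 1)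
    (n : ℕ) (s : ℝ) :
    ∑ r ∈ Finset.range (n + 1), binomialWeight n p r * Real.exp (t * r - s) ≤
      Real.exp (n * (p * t + p * t ^ 2) - s) := by
  simp only [Real.exp_sub, ← mul_div_assoc]
  rw [← Finset.sum_div, sum_binomialWeight_mul_exp, Real.exp_nat_mul]
  have h1 : 0 ≤ 1 - p := by linarith
  gcongr
  exact bernoulli_mgf_le hp0 ht

/-- Chernoff bound for the two tails of the binomial distribution. -/
theorem binomial_tail_le {p ε t : ℝ} (hp0 : 0 ≤ p) (hp1 : p ≤ 1) (ht0 : 0 ≤ t)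
    (ht1 : t ≤ 1) (htε : t ≤ ε / 2) (n : ℕ) :
    ∑ r ∈ (Finset.range (n + 1)).filter
        (fun r => r ∉ Finset.Icc ⌈(1 - ε) * n * p⌉₊ ⌊(1 + ε) * n * p⌋₊),
      binomialWeight n p r ≤ 2 * Real.exp (-(p * t * ε / 2 * n)) := by
  have hε : 0 ≤ ε := by linarith
  have hnp : 0 ≤ n * p * t := by positivity
  have hind : ∀ r : ℕ, r ∉ Finset.Icc ⌈(1 - ε) * n * p⌉₊ ⌊(1 + ε) * n * p⌋₊ →
      1 ≤ Real.exp (t * r - t * ((1 + ε) * n * p)) +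
        Real.exp (-t * r - -t * ((1 - ε) * n * p)) := by
    intro r hr
    rw [Finset.mem_Icc, not_and_or, not_le, not_le, Nat.lt_ceil,
      Nat.floor_lt (by positivity)] at hr
    rcases hr with hr | hr
    · have := Real.one_le_exp (x := -t * r - -t * ((1 - ε) * n * p)) (by nlinarith)
      linarith [Real.exp_pos (t * r - t * ((1 + ε) * n * p))]
    · have := Real.one_le_exp (x := t * r - t * ((1 + ε) * n * p)) (by nlinarith)
      linarith [Real.exp_pos (-t * r - -t * ((1 - ε) * n * p))]
  have hw := binomialWeight_nonneg hp0 hp1 n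
  have habs : |t| ≤ 1 := by rwa [abs_of_nonneg ht0]
  calc _ ≤ ∑ r ∈ (Finset.range (n + 1)).filter
        (fun r => r ∉ Finset.Icc ⌈(1 - ε) * n * p⌉₊ ⌊(1 + ε) * n * p⌋₊),
        binomialWeight n p r * (Real.exp (t * r - t * ((1 + ε) * n * p)) +
          Real.exp (-t * r - -t * ((1 - ε) * n * p))) := by
        refine Finset.sum_le_sum fun r hr => ?_
        exact le_mul_of_one_le_right (hw r) (hind r (Finset.mem_filter.1 hr).2)
    _ ≤ ∑ r ∈ Finset.range (n + 1),
        binomialWeight n p r * (Real.exp (t * r - t * ((1 + ε) * n * p)) +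
          Real.exp (-t * r - -t * ((1 - ε) * n * p))) := by
        refine Finset.sum_le_sum_of_subset_of_nonneg (Finset.filter_subset _ _)
          fun r _ _ => mul_nonneg (hw r) (by positivity)
    _ ≤ Real.exp (n * (p * t + p * t ^ 2) - t * ((1 + ε) * n * p)) +
        Real.exp (n * (p * -t + p * (-t) ^ 2) - -t * ((1 - ε) * n * p)) := by
        simp only [mul_add (binomialWeight n p _)]
        rw [Finset.sum_add_distrib]
        exact add_le_add (sum_binomialWeight_mul_exp_le hp0 hp1 habs n _)
          (sum_binomialWeight_mul_exp_le hp0 hp1 (by rwa [abs_neg]) n _)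
    _ ≤ Real.exp (-(p * t * ε / 2 * n)) + Real.exp (-(p * t * ε / 2 * n)) := by
        gcongr <;> nlinarith [mul_le_mul_of_nonneg_left htε hnp]
    _ = _ := by ring

theorem statDist_fber_le_sum_add_tail {n : ℕ} (C : Submodule (ZMod 2) (Fin n → ZMod 2))
    {p : ℝ} (hp0 : 0 ≤ p) (hp1 : p ≤ 1) (I : Finset ℕ) :
    statDist (unifQuot C) (periodize C (fber n p)) ≤
      ∑ r ∈ I, statDist (unifQuot C) (periodize C (funif n r)) +
        ∑ r ∈ (Finset.range (n + 1)).filter (fun r => r ∉ I), binomialWeight n p r := by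
  have hw := binomialWeight_nonneg hp0 hp1 n
  refine (statDist_fber_le_sum C hp0 hp1).trans ?_
  rw [← Finset.sum_filter_add_sum_filter_not _ (fun r => r ∈ I)]
  refine add_le_add ?_ (Finset.sum_le_sum fun r _ =>
    mul_le_of_le_one_right (hw r) (statDist_funif_le_one C r))
  calc _ ≤ ∑ r ∈ (Finset.range (n + 1)).filter (fun r => r ∈ I),
        statDist (unifQuot C) (periodize C (funif n r)) := by
        refine Finset.sum_le_sum fun r hr => mul_le_of_le_one_left (statDist_nonneg _ _) ?_
        rw [← sum_binomialWeight n p]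
        exact Finset.single_le_sum (fun i _ => hw i) (Finset.mem_filter.1 hr).1
    _ ≤ _ := Finset.sum_le_sum_of_subset_of_nonneg
        (fun r hr => (Finset.mem_filter.1 hr).2) fun r _ _ => statDist_nonneg _ _

/-- An exponentially small bound `2 * exp (-a n)`, together with the bound `1 - p ^ n` that is
nontrivial for small `n`, is dominated by `2 ^ (-c n)`. -/
theorem exists_rate {a p : ℝ} (ha : 0 < a) (hp0 : 0 < p) (hp1 : p ≤ 1) :
    ∃ c : ℝ, 0 < c ∧ ∀ n : ℕ, 2 * Real.exp (-(a * n)) ≤ (2 : ℝ) ^ (-(c * n)) ∨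
      1 - p ^ n ≤ (2 : ℝ) ^ (-(c * n)) := by
  have hl : 0 < Real.log 2 := Real.log_pos one_lt_two
  obtain ⟨N, hN⟩ := exists_nat_gt (2 * Real.log 2 / a)
  have hN0 : (0 : ℝ) < N := lt_trans (by positivity) hN
  rw [div_lt_iff₀ ha] at hN
  set b : ℝ := min (a / 2) (p ^ N / N)
  have hb0 : 0 < b := lt_min (by positivity) (by positivity)
  have hpow : ∀ n : ℕ, (2 : ℝ) ^ (-(b / Real.log 2 * n)) = Real.exp (-(b * n)) := fun n => by
    rw [Real.rpow_def_of_pos two_pos]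
    congr 1
    field_simp
  refine ⟨b / Real.log 2, by positivity, fun n => ?_⟩
  rw [hpow]
  rcases le_total N n with h | h
  · left
    have h' : (N : ℝ) ≤ n := by exact_mod_cast h
    have hba : b ≤ a / 2 := min_le_left _ _
    calc 2 * Real.exp (-(a * n)) = Real.exp (Real.log 2 + -(a * n)) := by
          rw [Real.exp_add, Real.exp_log two_pos]
      _ ≤ _ := by
          gcongr
          nlinarith
  · right
    have h' : (n : ℝ) ≤ N := by exact_mod_cast h
    have hbN : b * N ≤ p ^ N := by
      rw [← le_div_iff₀ hN0]
      exact min_le_right _ _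
    have hpn : p ^ N ≤ p ^ n := pow_le_pow_of_le_one hp0.le hp1 h
    have := Real.add_one_le_exp (-(b * n))
    nlinarith

/-- For every `p ∈ (0,1/2]` and `ε > 0` there is a constant `c > 0` such that for every
`n ≥ 1` and every linear code `𝒞 ⊆ 𝔽₂ⁿ`,
`Δ(u, f_ber,p^𝒞) ≤ Σ_{(1−ε)np ≤ r ≤ (1+ε)np} Δ(u, f_unif,r^𝒞) + 2^{−cn}`. -/
theorem bernoulli_vs_unif_smoothing (p : ℝ) (hp : p ∈ Set.Ioc (0 : ℝ) (1 / 2))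
    (ε : ℝ) (hε : 0 < ε) :
    ∃ c : ℝ, 0 < c ∧ ∀ n : ℕ, 1 ≤ n → ∀ C : Submodule (ZMod 2) (Fin n → ZMod 2),
      statDist (unifQuot C) (periodize C (fber n p)) ≤
        (∑ r ∈ Finset.Icc ⌈(1 - ε) * n * p⌉₊ ⌊(1 + ε) * n * p⌋₊,
          statDist (unifQuot C) (periodize C (funif n r))) +
        (2 : ℝ) ^ (-(c * n)) := by
  obtain ⟨hp0, hp⟩ := hp
  have ht : 0 < min 1 (ε / 2) := lt_min one_pos (by positivity)
  obtain ⟨c, hc, hrate⟩ := exists_rate (a := p * min 1 (ε / 2) * ε / 2) (by positivity) hp0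
    (by linarith)
  refine ⟨c, hc, fun n _ C => ?_⟩
  rcases hrate n with h | h
  · refine (statDist_fber_le_sum_add_tail C hp0.le (by linarith)
      (Finset.Icc ⌈(1 - ε) * n * p⌉₊ ⌊(1 + ε) * n * p⌋₊)).trans ?_
    gcongr
    exact (binomial_tail_le hp0.le (by linarith) ht.le (min_le_left _ _)
      (min_le_right _ _) n).trans h
  · have hsum := Finset.sum_nonneg fun r (_ : r ∈ Finset.Icc ⌈(1 - ε) * n * p⌉₊
      ⌊(1 + ε) * n * p⌋₊) => statDist_nonneg (unifQuot C) (periodize C (funif n r))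
    linarith [statDist_fber_le_one_sub_pow C hp0.le hp]
end

section
/- Let n ≥ 1 and s > 0. Define G_n(x) = x^{n+1}·V_n(1)·2π·exp(−πx²) for x ≥ 0. Then for every x ∈ ℝⁿ, D_s(x) = (1/s)·∫₀^∞ G_n(w/s)·(1_{B_w}(x)/V_n(w)) dw; moreover (1/s)·∫₀^∞ G_n(w/s) dw = 1. In other words, the Gaussian density of parameter s in dimension n is the convex combination, with weights (1/s)·G_n(w/s) dw, of the uniform densities on Euclidean balls of radius w. -/
open MeasureTheory

/-- `V_n(w) = π^{n/2} wⁿ / Γ(n/2+1)`, the volume of the Euclidean `n`-ball of radius `w`. -/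
noncomputable def Vball (n : ℕ) (w : ℝ) : ℝ :=
  Real.pi ^ ((n : ℝ) / 2) * w ^ n / Real.Gamma ((n : ℝ) / 2 + 1)

/-- `G_n(x) = x^{n+1} V_n(1) 2π exp(−πx²)`. -/
noncomputable def Gfun (n : ℕ) (x : ℝ) : ℝ :=
  x ^ (n + 1) * Vball n 1 * (2 * Real.pi) * Real.exp (-Real.pi * x ^ 2)

/-- The Gaussian density of parameter `s` on `ℝⁿ`: `D_s(x) = s^{−n} exp(−π|x|₂²/s²)`. -/
noncomputable def gaussD (n : ℕ) (s : ℝ) (x : EuclideanSpace ℝ (Fin n)) : ℝ :=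
  (s ^ n)⁻¹ * Real.exp (-Real.pi * ‖x‖ ^ 2 / s ^ 2)

lemma Vball_one_pos (n : ℕ) : 0 < Vball n 1 := by
  unfold Vball
  have : 0 < Real.Gamma ((n : ℝ) / 2 + 1) := Real.Gamma_pos_of_pos (by positivity)
  positivity

lemma Vball_eq_one_mul (n : ℕ) (w : ℝ) : Vball n w = Vball n 1 * w ^ n := by
  unfold Vball
  ring

lemma integral_Ioi_mul_exp_neg_pi_sq_div {s r : ℝ} (hs : 0 < s) (hr : 0 ≤ r) :
    ∫ w in Set.Ioi r, 2 * Real.pi * w / s ^ 2 * Real.exp (-Real.pi * w ^ 2 / s ^ 2) =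
      Real.exp (-Real.pi * r ^ 2 / s ^ 2) := by
  have hderiv (w : ℝ) : HasDerivAt (fun w ↦ -Real.exp (-Real.pi * w ^ 2 / s ^ 2))
      (2 * Real.pi * w / s ^ 2 * Real.exp (-Real.pi * w ^ 2 / s ^ 2)) w := by
    refine ((((hasDerivAt_pow 2 w).const_mul (-Real.pi)).div_const
      (s ^ 2)).exp).fun_neg.congr_deriv ?_
    push_cast
    ring
  have hlim : Filter.Tendsto (fun w : ℝ ↦ -Real.exp (-Real.pi * w ^ 2 / s ^ 2))
      Filter.atTop (nhds 0) := by
    rw [← neg_zero]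
    refine (Real.tendsto_exp_atBot.comp ?_).neg
    refine Filter.Tendsto.atBot_div_const (by positivity) ?_
    exact (Filter.tendsto_pow_atTop two_ne_zero).const_mul_atTop_of_neg
      (neg_lt_zero.mpr Real.pi_pos)
  rw [integral_Ioi_of_hasDerivAt_of_nonneg' (fun w _ ↦ hderiv w) (fun w hw ↦ ?_) hlim]
  · ring
  · have : 0 < w := hr.trans_lt hw
    positivity

lemma Gfun_mul_indicator_div_Vball (n : ℕ) {s r w : ℝ} (hs : 0 < s) (hw : 0 < w) :
    Gfun n (w / s) * ((if r ≤ w then (1 : ℝ) else 0) / Vball n w) =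
      (Set.Ici r).indicator (fun w ↦ s * (s ^ n)⁻¹ *
        (2 * Real.pi * w / s ^ 2 * Real.exp (-Real.pi * w ^ 2 / s ^ 2))) w := by
  by_cases h : r ≤ w
  · have hV := (Vball_one_pos n).ne'
    rw [Set.indicator_of_mem (Set.mem_Ici.mpr h), if_pos h, Vball_eq_one_mul n w, Gfun,
      div_pow w s (n + 1), div_pow w s 2, mul_div_assoc]
    field_simp
    ring
  · rw [Set.indicator_of_notMem (by simpa using h), if_neg h, zero_div, mul_zero]

lemma integral_Gfun (n : ℕ) : ∫ w in Set.Ioi (0 : ℝ), Gfun n w = 1 := by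
  have hΓ : 0 < Real.Gamma ((n : ℝ) / 2 + 1) := Real.Gamma_pos_of_pos (by positivity)
  have hmoment := integral_rpow_mul_exp_neg_mul_rpow (p := 2) (q := (n : ℝ) + 1)
    two_pos (by linarith [n.cast_nonneg (α := ℝ)]) Real.pi_pos
  have hG : ∀ w ∈ Set.Ioi (0 : ℝ), Gfun n w = Vball n 1 * (2 * Real.pi) *
      (w ^ ((n : ℝ) + 1) * Real.exp (-Real.pi * w ^ (2 : ℝ))) := fun w _ ↦ by
    rw [Gfun, Real.rpow_two, ← Nat.cast_add_one, Real.rpow_natCast]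
    ring
  have hexp : -((n : ℝ) + 1 + 1) / 2 = -((n : ℝ) / 2) - 1 := by ring
  have harg : ((n : ℝ) + 1 + 1) / 2 = (n : ℝ) / 2 + 1 := by ring
  rw [setIntegral_congr_fun measurableSet_Ioi hG, integral_const_mul, hmoment, hexp, harg,
    Real.rpow_sub_one Real.pi_ne_zero, Real.rpow_neg Real.pi_pos.le, Vball]
  have := (Real.rpow_pos_of_pos Real.pi_pos ((n : ℝ) / 2)).ne'
  field_simp
  simp

/-- The Gaussian density of parameter `s` in dimension `n` is the convex combination,
with weights `(1/s) G_n(w/s) dw`, of the uniform densities on Euclidean balls of radius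
`w`:  `D_s(x) = (1/s) ∫₀^∞ G_n(w/s) (1_{B_w}(x)/V_n(w)) dw` and
`(1/s) ∫₀^∞ G_n(w/s) dw = 1`. -/
theorem gaussian_convex_combination_of_balls (n : ℕ) (hn : 1 ≤ n) (s : ℝ) (hs : 0 < s) :
    (∀ x : EuclideanSpace ℝ (Fin n),
      gaussD n s x =
        (1 / s) * ∫ w in Set.Ioi (0 : ℝ),
          Gfun n (w / s) * ((if ‖x‖ ≤ w then (1 : ℝ) else 0) / Vball n w)) ∧
    (1 / s) * (∫ w in Set.Ioi (0 : ℝ), Gfun n (w / s)) = 1 := by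
  refine ⟨fun x ↦ ?_, ?_⟩
  · have hae : (Set.Ioi 0 ∩ Set.Ici ‖x‖ : Set ℝ) =ᵐ[volume] Set.Ioi ‖x‖ := by
      have h : (Set.Ioi 0 ∩ Set.Ici ‖x‖ : Set ℝ) =ᵐ[volume] (Set.Ioi 0 ∩ Set.Ioi ‖x‖ : Set ℝ) :=
        (Filter.EventuallyEq.refl _ _).inter Ioi_ae_eq_Ici.symm
      rwa [Set.Ioi_inter_Ioi, max_eq_right (norm_nonneg x)] at h
    rw [setIntegral_congr_fun measurableSet_Ioi
        (fun w hw ↦ Gfun_mul_indicator_div_Vball n hs hw),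
      setIntegral_indicator measurableSet_Ici, setIntegral_congr_set hae, integral_const_mul,
      integral_Ioi_mul_exp_neg_pi_sq_div hs (norm_nonneg x), gaussD]
    field_simp
  · have h := integral_comp_mul_left_Ioi (Gfun n) 0 (inv_pos.mpr hs)
    simp only [mul_zero, inv_inv, integral_Gfun, smul_eq_mul, mul_one] at h
    simp only [div_eq_inv_mul, h, mul_one]
    exact inv_mul_cancel₀ hs.ne'
end

section
/- Let n ≥ 1 and let Λ ⊂ ℝⁿ be a full-rank lattice with fundamental domain F. Suppose there exist w₀ > 0 and K ≥ 0 such that for all w > w₀, Δ(u, f_unif,w^Λ) ≤ K·(w₀/w)^{n/2}. Set s₀ = w₀·√(2π/n). Then for every s > s₀, setting η = 1 − s₀/s ∈ (0,1), one has Δ(u, D_s^Λ) ≤ exp(−η²·n/8) + K·(s₀/s)^{n/4}. -/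
open MeasureTheory
open scoped BigOperators

/-- The periodization `g^Λ(x) = Σ_{y ∈ Λ} g(x+y)` of `g` over the lattice `Λ`. -/
noncomputable def perioL {n : ℕ} (Λ : Submodule ℤ (EuclideanSpace ℝ (Fin n)))
    (g : EuclideanSpace ℝ (Fin n) → ℝ) (x : EuclideanSpace ℝ (Fin n)) : ℝ :=
  ∑' y : Λ, g (x + y)

/-- The statistical distance `Δ(u, g^Λ) = (1/2) ∫_F |1/|Λ| − g^Λ(x)| dx`, where the
covolume `|Λ|` is the volume of the fundamental domain `F`. -/
noncomputable def latSD {n : ℕ} (Λ : Submodule ℤ (EuclideanSpace ℝ (Fin n)))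
    (F : Set (EuclideanSpace ℝ (Fin n))) (g : EuclideanSpace ℝ (Fin n) → ℝ) : ℝ :=
  (1 / 2) * ∫ x in F, |((volume F).toReal)⁻¹ - perioL Λ g x|

/-- The uniform density `1_{B_w}/V_n(w)` on the Euclidean ball of radius `w`. -/
noncomputable def funifL (n : ℕ) (w : ℝ) (x : EuclideanSpace ℝ (Fin n)) : ℝ :=
  if ‖x‖ ≤ w then (Vball n w)⁻¹ else 0

open ProbabilityTheory
open scoped ENNReal

/-- The `ℝ≥0∞`-valued periodization of a function over a lattice. -/
noncomputable def ennrealPeriodization {n : ℕ} (Λ : Submodule ℤ (EuclideanSpace ℝ (Fin n)))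
    (g : EuclideanSpace ℝ (Fin n) → ℝ) (x : EuclideanSpace ℝ (Fin n)) : ℝ≥0∞ :=
  ∑' y : Λ, ENNReal.ofReal (g (x + y))

lemma perioL_eq_toReal {n : ℕ} (Λ : Submodule ℤ (EuclideanSpace ℝ (Fin n)))
    {g : EuclideanSpace ℝ (Fin n) → ℝ} (hg : ∀ x, 0 ≤ g x) (x : EuclideanSpace ℝ (Fin n)) :
    perioL Λ g x = (ennrealPeriodization Λ g x).toReal := by
  rw [ennrealPeriodization, ENNReal.tsum_toReal_eq (fun _ => ENNReal.ofReal_ne_top), perioL]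
  exact tsum_congr fun y => (ENNReal.toReal_ofReal (hg _)).symm

section Periodization

variable {n : ℕ} {Λ : Submodule ℤ (EuclideanSpace ℝ (Fin n))} [DiscreteTopology Λ]
  [IsZLattice ℝ Λ] {F : Set (EuclideanSpace ℝ (Fin n))}

instance (Λ : Submodule ℤ (EuclideanSpace ℝ (Fin n))) :
    VAddInvariantMeasure Λ (EuclideanSpace ℝ (Fin n)) volume :=
  ⟨fun y s _ => measure_preimage_add volume (y : EuclideanSpace ℝ (Fin n)) s⟩

lemma measurable_ennrealPeriodization {g : EuclideanSpace ℝ (Fin n) → ℝ} (hg : Measurable g) :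
    Measurable (ennrealPeriodization Λ g) := by
  unfold ennrealPeriodization
  fun_prop

lemma lintegral_ennrealPeriodization (hF : IsAddFundamentalDomain Λ F volume)
    {g : EuclideanSpace ℝ (Fin n) → ℝ} (hg : Measurable g) :
    ∫⁻ x in F, ennrealPeriodization Λ g x = ∫⁻ x, ENNReal.ofReal (g x) := by
  unfold ennrealPeriodization
  rw [lintegral_tsum (fun y => by fun_prop), hF.lintegral_eq_tsum'']
  refine tsum_congr fun y => lintegral_congr fun x => ?_
  rw [add_comm]
  rfl

lemma latSD_eq_toReal_lintegral {g : EuclideanSpace ℝ (Fin n) → ℝ} (hg : Measurable g)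
    (hg0 : ∀ x, 0 ≤ g x) :
    latSD Λ F g = (1 / 2) * (∫⁻ x in F, ‖((volume F).toReal)⁻¹ -
      (ennrealPeriodization Λ g x).toReal‖ₑ).toReal := by
  have hm := measurable_ennrealPeriodization (Λ := Λ) hg
  rw [latSD, ← integral_norm_eq_lintegral_enorm
    (hm.ennreal_toReal.const_sub _).aestronglyMeasurable]
  simp only [perioL_eq_toReal Λ hg0, Real.norm_eq_abs]

lemma lintegral_enorm_inv_sub_periodization_le_two (hF : IsAddFundamentalDomain Λ F volume)
    {g : EuclideanSpace ℝ (Fin n) → ℝ} (hg : Measurable g)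
    (hg1 : ∫⁻ x, ENNReal.ofReal (g x) ≤ 1) :
    ∫⁻ x in F, ‖((volume F).toReal)⁻¹ - (ennrealPeriodization Λ g x).toReal‖ₑ ≤ 2 := by
  calc ∫⁻ x in F, ‖((volume F).toReal)⁻¹ - (ennrealPeriodization Λ g x).toReal‖ₑ
      ≤ ∫⁻ x in F, (‖((volume F).toReal)⁻¹‖ₑ + ennrealPeriodization Λ g x) := by
        refine lintegral_mono fun x => (enorm_sub_le).trans ?_
        gcongr
        rw [Real.enorm_of_nonneg ENNReal.toReal_nonneg]
        exact ENNReal.ofReal_toReal_le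
    _ = ‖((volume F).toReal)⁻¹‖ₑ * volume F + ∫⁻ x, ENNReal.ofReal (g x) := by
        rw [lintegral_add_left measurable_const, lintegral_ennrealPeriodization hF hg,
          setLIntegral_const]
    _ ≤ 1 + 1 := by
        gcongr
        rw [Real.enorm_of_nonneg (by positivity)]
        rcases eq_or_ne (volume F) ⊤ with h | h
        · simp [h]
        rcases eq_or_ne (volume F) 0 with h0 | h0
        · simp [h0]
        rw [ENNReal.ofReal_inv_of_pos (ENNReal.toReal_pos h0 h), ENNReal.ofReal_toReal h,
          ENNReal.inv_mul_cancel h0 h]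
    _ = 2 := one_add_one_eq_two

/-- The `L¹` distance to uniform of a mixture is at most the average of the distances. -/
lemma lintegral_enorm_inv_sub_periodization_mixture_le (hF : IsAddFundamentalDomain Λ F volume)
    {T : Type*} [MeasurableSpace T] {μ : Measure T} [IsProbabilityMeasure μ]
    {f : T → EuclideanSpace ℝ (Fin n) → ℝ} (hf : Measurable (Function.uncurry f))
    {g : EuclideanSpace ℝ (Fin n) → ℝ} (hg : Measurable g)
    (hgf : ∀ x, ENNReal.ofReal (g x) = ∫⁻ t, ENNReal.ofReal (f t x) ∂μ)
    (hf1 : ∀ t, ∫⁻ x, ENNReal.ofReal (f t x) ≤ 1) :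
    ∫⁻ x in F, ‖((volume F).toReal)⁻¹ - (ennrealPeriodization Λ g x).toReal‖ₑ ≤
      ∫⁻ t, (∫⁻ x in F,
        ‖((volume F).toReal)⁻¹ - (ennrealPeriodization Λ (f t) x).toReal‖ₑ) ∂μ := by
  have hjoint : Measurable (Function.uncurry fun t x => ennrealPeriodization Λ (f t) x) := by
    unfold ennrealPeriodization
    refine Measurable.tsum fun y => ENNReal.measurable_ofReal.comp ?_
    exact hf.comp (measurable_fst.prodMk (measurable_snd.add_const _))
  have hfx : ∀ x, Measurable fun t => f t x := fun x =>
    hf.comp (measurable_id.prodMk measurable_const)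
  have hmix : ∀ x, ennrealPeriodization Λ g x = ∫⁻ t, ennrealPeriodization Λ (f t) x ∂μ := by
    intro x
    unfold ennrealPeriodization
    rw [lintegral_tsum (fun y => (hfx _).ennreal_ofReal.aemeasurable)]
    exact tsum_congr fun y => hgf _
  have hg1 : ∫⁻ x, ENNReal.ofReal (g x) ≤ 1 := by
    simp_rw [hgf]
    rw [lintegral_lintegral_swap]
    · calc _ ≤ ∫⁻ _, 1 ∂μ := lintegral_mono hf1
        _ = 1 := by simp
    · exact (ENNReal.measurable_ofReal.comp (hf.comp measurable_swap)).aemeasurable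
  have hfin : ∀ᵐ x ∂(volume.restrict F), ennrealPeriodization Λ g x < ⊤ := by
    refine ae_lt_top (measurable_ennrealPeriodization hg) ?_
    rw [lintegral_ennrealPeriodization hF hg]
    exact (hg1.trans_lt ENNReal.one_lt_top).ne
  rw [lintegral_lintegral_swap]
  · refine lintegral_mono_ae ?_
    filter_upwards [hfin] with x hx
    rw [hmix] at hx ⊢
    have hmx : Measurable fun t => ennrealPeriodization Λ (f t) x :=
      hjoint.comp (measurable_id.prodMk measurable_const)
    rw [← integral_toReal hmx.aemeasurable (ae_lt_top hmx hx.ne)]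
    have hint := integrable_toReal_of_lintegral_ne_top hmx.aemeasurable hx.ne
    have hc : ((volume F).toReal)⁻¹ = ∫ _, ((volume F).toReal)⁻¹ ∂μ := by simp
    rw [hc, ← integral_sub (integrable_const _) hint, ← hc]
    exact enorm_integral_le_lintegral_enorm _
  · exact (measurable_const.sub hjoint.ennreal_toReal).enorm.aemeasurable

end Periodization

lemma measurable_gammaPDF (a r : ℝ) : Measurable (gammaPDF a r) :=
  (measurable_gammaPDFReal a r).ennreal_ofReal

section UniformBall

variable {n : ℕ}

lemma Vball_nonneg {w : ℝ} (hw : 0 ≤ w) : 0 ≤ Vball n w := by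
  have := Real.Gamma_pos_of_pos (show (0 : ℝ) < n / 2 + 1 by positivity)
  unfold Vball
  positivity

lemma funifL_nonneg {w : ℝ} (hw : 0 ≤ w) (x : EuclideanSpace ℝ (Fin n)) : 0 ≤ funifL n w x := by
  unfold funifL
  have := Vball_nonneg (n := n) hw
  split_ifs <;> positivity

lemma Measurable.funifL {α : Type*} [MeasurableSpace α] {u : α → ℝ}
    {v : α → EuclideanSpace ℝ (Fin n)} (hu : Measurable u) (hv : Measurable v) :
    Measurable fun a => funifL n (u a) (v a) := by
  unfold _root_.funifL Vball
  refine Measurable.ite (measurableSet_le (by fun_prop) (by fun_prop)) ?_ measurable_const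
  fun_prop

lemma lintegral_funifL_le_one (hn : 1 ≤ n) {w : ℝ} (hw : 0 ≤ w) :
    ∫⁻ x, ENNReal.ofReal (funifL n w x) ≤ 1 := by
  have : Nonempty (Fin n) := ⟨⟨0, hn⟩⟩
  have hvol : volume (Metric.closedBall (0 : EuclideanSpace ℝ (Fin n)) w) =
      ENNReal.ofReal (Vball n w) := by
    rw [EuclideanSpace.volume_closedBall, Fintype.card_fin, ← ENNReal.ofReal_pow hw,
      ← ENNReal.ofReal_mul (by positivity), Vball, Real.sqrt_eq_rpow, ← Real.rpow_natCast,
      ← Real.rpow_natCast, ← Real.rpow_mul Real.pi_pos.le]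
    ring_nf
  have hind : (fun x => ENNReal.ofReal (funifL n w x)) =
      (Metric.closedBall (0 : EuclideanSpace ℝ (Fin n)) w).indicator
        fun _ => ENNReal.ofReal (Vball n w)⁻¹ := by
    ext x
    by_cases h : ‖x‖ ≤ w <;> simp [funifL, h]
  rw [hind, lintegral_indicator_const Metric.isClosed_closedBall.measurableSet, hvol,
    ← ENNReal.ofReal_mul (inv_nonneg.2 (Vball_nonneg hw)), ← ENNReal.ofReal_one]
  exact ENNReal.ofReal_le_ofReal inv_mul_le_one

lemma Vball_mul_sqrt {s t : ℝ} (ht : 0 ≤ t) :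
    Vball n (s * √(t / Real.pi)) = s ^ n * t ^ ((n : ℝ) / 2) / Real.Gamma ((n : ℝ) / 2 + 1) := by
  have hsq : √(t / Real.pi) ^ n = t ^ ((n : ℝ) / 2) / Real.pi ^ ((n : ℝ) / 2) := by
    rw [← Real.div_rpow ht Real.pi_pos.le, Real.sqrt_eq_rpow, ← Real.rpow_natCast,
      ← Real.rpow_mul (by positivity)]
    ring_nf
  have : Real.pi ^ ((n : ℝ) / 2) ≠ 0 := (Real.rpow_pos_of_pos Real.pi_pos _).ne'
  rw [Vball, mul_pow, hsq]
  field_simp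

lemma le_mul_sqrt_div_pi_iff {s t a : ℝ} (hs : 0 < s) (ht : 0 ≤ t) (ha : 0 ≤ a) :
    a ≤ s * √(t / Real.pi) ↔ Real.pi * a ^ 2 / s ^ 2 ≤ t := by
  have hpi := Real.pi_pos
  rw [← div_le_iff₀' hs, Real.le_sqrt (by positivity) (by positivity), div_pow,
    le_div_iff₀ hpi]
  ring_nf

lemma gammaPDF_mul_funifL {s t : ℝ} (hs : 0 < s) (ht : t ≠ 0) (x : EuclideanSpace ℝ (Fin n)) :
    gammaPDF ((n : ℝ) / 2 + 1) 1 t * ENNReal.ofReal (funifL n (s * √(t / Real.pi)) x) =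
      (Set.Ici (Real.pi * ‖x‖ ^ 2 / s ^ 2)).indicator
        (fun t => ENNReal.ofReal ((s ^ n)⁻¹ * Real.exp (-t))) t := by
  have hpi := Real.pi_pos
  rcases lt_or_gt_of_ne ht with h | h
  · rw [gammaPDF_of_neg h, zero_mul, Set.indicator_of_notMem]
    rw [Set.mem_Ici, not_le]
    exact h.trans_le (by positivity)
  by_cases hx : Real.pi * ‖x‖ ^ 2 / s ^ 2 ≤ t
  · have hG := Real.Gamma_pos_of_pos (show (0 : ℝ) < n / 2 + 1 by positivity)
    rw [Set.indicator_of_mem (Set.mem_Ici.2 hx), funifL,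
      if_pos ((le_mul_sqrt_div_pi_iff hs h.le (norm_nonneg x)).2 hx), Vball_mul_sqrt h.le,
      gammaPDF_of_nonneg h.le, ← ENNReal.ofReal_mul (by positivity)]
    have := Real.rpow_pos_of_pos h ((n : ℝ) / 2)
    congr 1
    rw [Real.one_rpow, add_sub_cancel_right, one_mul]
    field_simp
  · rw [Set.indicator_of_notMem (by simpa using hx), funifL,
      if_neg (mt (le_mul_sqrt_div_pi_iff hs h.le (norm_nonneg x)).1 hx)]
    simp

/-- A Gaussian is a mixture of uniform densities on balls, with Gamma-distributed squared radius. -/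
lemma gaussD_eq_lintegral_funifL {s : ℝ} (hs : 0 < s) (x : EuclideanSpace ℝ (Fin n)) :
    ENNReal.ofReal (gaussD n s x) =
      ∫⁻ t, ENNReal.ofReal (funifL n (s * √(t / Real.pi)) x)
        ∂(gammaMeasure ((n : ℝ) / 2 + 1) 1) := by
  have hm : Measurable fun t : ℝ => ENNReal.ofReal (funifL n (s * √(t / Real.pi)) x) :=
    (Measurable.funifL (by fun_prop) measurable_const).ennreal_ofReal
  rw [gammaMeasure, lintegral_withDensity_eq_lintegral_mul _
    (measurable_gammaPDF _ _) hm]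
  simp only [Pi.mul_apply]
  rw [lintegral_congr_ae ((Measure.ae_ne volume (0 : ℝ)).mono
    fun t ht => gammaPDF_mul_funifL hs ht x), lintegral_indicator measurableSet_Ici,
    setLIntegral_congr Ioi_ae_eq_Ici.symm, ← ofReal_integral_eq_lintegral_ofReal
      ((integrableOn_exp_neg_Ioi _).const_mul _) (ae_of_all _ fun t => by positivity),
    integral_const_mul, integral_exp_neg_Ioi, gaussD]
  ring_nf

end UniformBall

lemma mul_exp_one_sub_le {r : ℝ} (hr : 0 < r) :
    r * Real.exp (1 - r) ≤ Real.exp (-(1 - √r) ^ 2) := by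
  have hq := Real.sqrt_pos.2 hr
  have hsq := Real.sq_sqrt hr.le
  have h1 : √r ≤ Real.exp (√r - 1) := by linarith [Real.add_one_le_exp (√r - 1)]
  calc r * Real.exp (1 - r) = √r ^ 2 * Real.exp (1 - r) := by rw [hsq]
    _ ≤ Real.exp (√r - 1) ^ 2 * Real.exp (1 - r) := by gcongr
    _ = Real.exp (-(1 - √r) ^ 2) := by
      rw [← Real.exp_nat_mul, ← Real.exp_add]
      congr 1
      push_cast
      linear_combination hsq

/-- Chernoff bound for the lower tail of a Gamma distribution of shape `m + 1`. -/
lemma gammaMeasure_Iic_le {m r : ℝ} (hm : 0 ≤ m) (hr : 0 < r) (hr1 : r ≤ 1) :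
    gammaMeasure (m + 1) 1 (Set.Iic (m * r)) ≤
      ENNReal.ofReal (Real.exp (-(1 - r) ^ 2 * m / 4)) := by
  have hG := Real.Gamma_pos_of_pos (show (0 : ℝ) < m + 1 by positivity)
  have hpoint : ∀ t ∈ Set.Iic (m * r), gammaPDF (m + 1) 1 t ≤
      ENNReal.ofReal (r ^ (m + 1) * Real.exp (m * (1 - r))) * gammaPDF (m + 1) r⁻¹ t := by
    intro t ht
    rcases lt_or_ge t 0 with h | h
    · simp [gammaPDF_of_neg h]
    rw [gammaPDF_of_nonneg h, gammaPDF_of_nonneg h, ← ENNReal.ofReal_mul (by positivity)]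
    apply ENNReal.ofReal_le_ofReal
    have hexp : Real.exp (-(1 * t)) ≤ Real.exp (m * (1 - r)) * Real.exp (-(r⁻¹ * t)) := by
      rw [← Real.exp_add, Real.exp_le_exp]
      have h2 : r⁻¹ * t ≤ m := by
        rw [inv_mul_le_iff₀ hr, mul_comm]; exact ht
      have h3 : t = r * (r⁻¹ * t) := by field_simp
      nlinarith
    have hrr : r ^ (m + 1) * r⁻¹ ^ (m + 1) = 1 := by
      rw [← Real.mul_rpow hr.le (by positivity), mul_inv_cancel₀ hr.ne', Real.one_rpow]
    calc 1 ^ (m + 1) / Real.Gamma (m + 1) * t ^ (m + 1 - 1) * Real.exp (-(1 * t))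
        ≤ 1 / Real.Gamma (m + 1) * t ^ (m + 1 - 1) *
          (Real.exp (m * (1 - r)) * Real.exp (-(r⁻¹ * t))) := by
          rw [Real.one_rpow]
          gcongr
      _ = r ^ (m + 1) * r⁻¹ ^ (m + 1) / Real.Gamma (m + 1) * t ^ (m + 1 - 1) *
          (Real.exp (m * (1 - r)) * Real.exp (-(r⁻¹ * t))) := by rw [hrr]
      _ = _ := by ring
  have hbound : r ^ (m + 1) * Real.exp (m * (1 - r)) ≤ Real.exp (-(1 - r) ^ 2 * m / 4) := by
    have hs0 := Real.sqrt_nonneg r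
    have hs1 := Real.sqrt_le_one.2 hr1
    have hsq := Real.sq_sqrt hr.le
    calc r ^ (m + 1) * Real.exp (m * (1 - r))
        ≤ r ^ m * Real.exp (m * (1 - r)) := by
          gcongr ?_ * _
          exact Real.rpow_le_rpow_of_exponent_ge hr hr1 (by linarith)
      _ = (r * Real.exp (1 - r)) ^ m := by
          rw [Real.mul_rpow hr.le (Real.exp_pos _).le, ← Real.exp_mul, mul_comm m]
      _ ≤ Real.exp (-(1 - √r) ^ 2) ^ m :=
          Real.rpow_le_rpow (by positivity) (mul_exp_one_sub_le hr) hm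
      _ ≤ Real.exp (-(1 - r) ^ 2 * m / 4) := by
          rw [← Real.exp_mul, Real.exp_le_exp]
          have h1 : 1 - r = (1 - √r) * (1 + √r) := by linear_combination hsq
          have h2 : (1 - r) ^ 2 ≤ 4 * (1 - √r) ^ 2 := by
            rw [h1, mul_pow]
            nlinarith [sq_nonneg (1 - √r)]
          nlinarith
  calc gammaMeasure (m + 1) 1 (Set.Iic (m * r))
      = ∫⁻ t in Set.Iic (m * r), gammaPDF (m + 1) 1 t := by
        rw [gammaMeasure, withDensity_apply _ measurableSet_Iic]
    _ ≤ ∫⁻ t in Set.Iic (m * r),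
          ENNReal.ofReal (r ^ (m + 1) * Real.exp (m * (1 - r))) * gammaPDF (m + 1) r⁻¹ t :=
        setLIntegral_mono' measurableSet_Iic hpoint
    _ ≤ ∫⁻ t, ENNReal.ofReal (r ^ (m + 1) * Real.exp (m * (1 - r))) * gammaPDF (m + 1) r⁻¹ t :=
        setLIntegral_le_lintegral _ _
    _ = ENNReal.ofReal (r ^ (m + 1) * Real.exp (m * (1 - r))) := by
        rw [lintegral_const_mul _ (measurable_gammaPDF _ _),
          lintegral_gammaPDF_eq_one (by positivity) (inv_pos.2 hr), mul_one]
    _ ≤ _ := ENNReal.ofReal_le_ofReal hbound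

/-- Transfer from uniform-ball smoothing to Gaussian smoothing for a fixed full-rank
lattice `Λ` with fundamental domain `F`: if `Δ(u, f_unif,w^Λ) ≤ K (w₀/w)^{n/2}` for all
`w > w₀`, then with `s₀ = w₀ √(2π/n)`, for all `s > s₀` and `η = 1 − s₀/s`,
`Δ(u, D_s^Λ) ≤ exp(−η²n/8) + K (s₀/s)^{n/4}`. -/
theorem gaussian_smoothing_from_uniform_ball {n : ℕ} (hn : 1 ≤ n)
    (Λ : Submodule ℤ (EuclideanSpace ℝ (Fin n))) [DiscreteTopology Λ] [IsZLattice ℝ Λ]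
    (F : Set (EuclideanSpace ℝ (Fin n)))
    (hF : IsAddFundamentalDomain Λ F volume)
    (w₀ K : ℝ) (hw₀ : 0 < w₀) (hK : 0 ≤ K)
    (hsm : ∀ w : ℝ, w₀ < w → latSD Λ F (funifL n w) ≤ K * (w₀ / w) ^ ((n : ℝ) / 2)) :
    ∀ s : ℝ, w₀ * Real.sqrt (2 * Real.pi / n) < s →
      latSD Λ F (gaussD n s) ≤
        Real.exp (-(1 - w₀ * Real.sqrt (2 * Real.pi / n) / s) ^ 2 * n / 8) +
          K * (w₀ * Real.sqrt (2 * Real.pi / n) / s) ^ ((n : ℝ) / 4) := by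
  intro s hs
  have hpi := Real.pi_pos
  have hn0 : (0 : ℝ) < n := by exact_mod_cast hn
  set q := √(2 * Real.pi / n)
  have hq0 : 0 < q := Real.sqrt_pos.2 (by positivity)
  have hs0 : 0 < s := (mul_pos hw₀ hq0).trans hs
  set r := w₀ * q / s with hr
  have hr0 : 0 < r := by positivity
  have hr1 : r < 1 := (div_lt_one hs0).2 hs
  set μ := gammaMeasure ((n : ℝ) / 2 + 1) 1
  have : IsProbabilityMeasure μ :=
    isProbabilityMeasure_gammaMeasure (by positivity) one_pos
  set f : ℝ → EuclideanSpace ℝ (Fin n) → ℝ := fun t => funifL n (s * √(t / Real.pi))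
  have hw : ∀ t : ℝ, 0 ≤ s * √(t / Real.pi) := fun t => by positivity
  have hfm : Measurable (Function.uncurry f) :=
    Measurable.funifL (u := fun p => s * √(p.1 / Real.pi)) (by fun_prop) measurable_snd
  have hft : ∀ t, Measurable (f t) := fun t =>
    Measurable.funifL measurable_const measurable_id
  have hg : Measurable (gaussD n s) := by
    unfold gaussD
    fun_prop
  have hg0 : ∀ x, 0 ≤ gaussD n s x := fun x => by
    unfold gaussD
    positivity
  have hf1 : ∀ t, ∫⁻ x, ENNReal.ofReal (f t x) ≤ 1 := fun t => lintegral_funifL_le_one hn (hw t)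
  set E : ℝ≥0∞ := ENNReal.ofReal (2 * (K * r ^ ((n : ℝ) / 4))) with hE
  -- The radius corresponding to `t` is `w₀ / √r` at the threshold `t = n / 2 * r`.
  have hlarge : ∀ t, (n : ℝ) / 2 * r < t → ∫⁻ x in F,
      ‖((volume F).toReal)⁻¹ - (ennrealPeriodization Λ (f t) x).toReal‖ₑ ≤ E := by
    intro t ht
    have ht0 : 0 < t := lt_trans (by positivity) ht
    have hqsq : q ^ 2 = 2 * Real.pi / n := Real.sq_sqrt (by positivity)
    have hwsq : w₀ ^ 2 < r * (s * √(t / Real.pi)) ^ 2 := by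
      rw [mul_pow, Real.sq_sqrt (by positivity)]
      calc w₀ ^ 2 = r * (s ^ 2 * ((n : ℝ) / 2 * r / Real.pi)) := by
            rw [hr]
            field_simp
            rw [hqsq]
            field_simp
        _ < r * (s ^ 2 * (t / Real.pi)) := by gcongr
    have hwpos : 0 < s * √(t / Real.pi) := by positivity
    have hwlt : w₀ < s * √(t / Real.pi) := by
      refine lt_of_pow_lt_pow_left₀ 2 (hw t) (hwsq.trans_le ?_)
      exact mul_le_of_le_one_left (by positivity) hr1.le
    have hpow : (w₀ / (s * √(t / Real.pi))) ^ ((n : ℝ) / 2) ≤ r ^ ((n : ℝ) / 4) := by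
      calc (w₀ / (s * √(t / Real.pi))) ^ ((n : ℝ) / 2)
          = ((w₀ / (s * √(t / Real.pi))) ^ 2) ^ ((n : ℝ) / 4) := by
            rw [← Real.rpow_natCast, ← Real.rpow_mul (by positivity)]
            congr 1
            push_cast
            ring
        _ ≤ r ^ ((n : ℝ) / 4) := by
            refine Real.rpow_le_rpow (by positivity) ?_ (by positivity)
            rw [div_pow, div_le_iff₀ (by positivity)]
            exact hwsq.le
    have hle := hsm _ hwlt
    rw [latSD_eq_toReal_lintegral (hft t) (funifL_nonneg (hw t))] at hle
    rw [hE, ENNReal.le_ofReal_iff_toReal_le _ (by positivity)]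
    · linarith [mul_le_mul_of_nonneg_left hpow hK]
    · exact ne_top_of_le_ne_top ENNReal.ofNat_ne_top
        (lintegral_enorm_inv_sub_periodization_le_two hF (hft t) (hf1 t))
  have htail : μ (Set.Iic ((n : ℝ) / 2 * r)) ≤
      ENNReal.ofReal (Real.exp (-(1 - r) ^ 2 * n / 8)) := by
    refine (gammaMeasure_Iic_le (by positivity) hr0 hr1.le).trans_eq ?_
    ring_nf
  have hmain : ∫⁻ x in F,
      ‖((volume F).toReal)⁻¹ - (ennrealPeriodization Λ (gaussD n s) x).toReal‖ₑ ≤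
      ENNReal.ofReal (2 * (Real.exp (-(1 - r) ^ 2 * n / 8) + K * r ^ ((n : ℝ) / 4))) := by
    refine (lintegral_enorm_inv_sub_periodization_mixture_le hF hfm hg
      (gaussD_eq_lintegral_funifL hs0) hf1).trans ?_
    rw [← lintegral_add_compl _ (measurableSet_Iic (a := (n : ℝ) / 2 * r)), mul_add,
      ENNReal.ofReal_add (by positivity) (by positivity)]
    refine add_le_add ?_ ?_
    · refine (setLIntegral_mono' (g := fun _ => 2) measurableSet_Iic fun t _ =>
        lintegral_enorm_inv_sub_periodization_le_two hF (hft t) (hf1 t)).trans ?_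
      rw [setLIntegral_const, ENNReal.ofReal_mul zero_le_two, ENNReal.ofReal_ofNat]
      gcongr
    · refine (setLIntegral_mono' (g := fun _ => E) measurableSet_Iic.compl fun t ht =>
        hlarge t (not_le.1 ht)).trans ?_
      rw [setLIntegral_const]
      exact mul_le_of_le_one_right' prob_le_one
  rw [latSD_eq_toReal_lintegral hg hg0]
  have := ENNReal.toReal_le_of_le_ofReal (by positivity) hmain
  linarith
end
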